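/- arXiv:1711.06585 — 2 statements merged into one kernel-verified Lean document; each statement's English description precedes it below -/
import Mathlib

section
/- Let A be an abelian category and let E = (0 → B → E₁ → ... → Eₙ → A → 0) be an n-extension of A by B. Then the Yoneda class of E is zero in YExtⁿ(A,B) if and only if there exists an (n-1)-extension F = (0 → B → F₁ → ... → F_{n-1} → Eₙ → 0) and a morphism of complexes φ : E → F inducing the identity on B and on Eₙ. -/
open CategoryTheory Category Limits ZeroObject

universe v u

/-- The data of a sequence `X 0 ⟶ X 1 ⟶ ⋯ ⟶ X (n+1)` in an abelian category;
an `n`-extension of `X (n+1)` by `X 0` when `IsExt` holds. -/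
structure PreExt (C : Type u) [Category.{v} C] [Abelian C] (n : ℕ) where
  X : ℕ → C
  d : ∀ i, X i ⟶ X (i + 1)

namespace PreExt

variable {C : Type u} [Category.{v} C] [Abelian C] {n : ℕ}

/-- `E` is an exact `n`-extension: `0 → X 0 → ⋯ → X (n+1) → 0` is exact. -/
def IsExt (E : PreExt C n) : Prop :=
  Mono (E.d 0) ∧ Epi (E.d n) ∧
    ∀ i, i + 1 ≤ n → ∃ w : E.d i ≫ E.d (i + 1) = 0,
      (ShortComplex.mk (E.d i) (E.d (i + 1)) w).Exact

/-- A morphism of `n`-extensions inducing the identity on both ends. -/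
def Ladder (E F : PreExt C n) : Prop :=
  ∃ (h0 : E.X 0 = F.X 0) (h1 : E.X (n + 1) = F.X (n + 1))
    (φ : ∀ i, E.X i ⟶ F.X i),
    φ 0 = eqToHom h0 ∧ φ (n + 1) = eqToHom h1 ∧
    ∀ i, i ≤ n → E.d i ≫ φ (i + 1) = φ i ≫ F.d i

/-- One step of the Yoneda equivalence relation. -/
def ExtRel (E F : PreExt C n) : Prop := E.IsExt ∧ F.IsExt ∧ Ladder E F

/-- Yoneda equivalence of `n`-extensions: the equivalence relation generated by
morphisms of extensions inducing the identity on both ends. -/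
def YEquiv (E F : PreExt C n) : Prop := Relation.EqvGen ExtRel E F

end PreExt

section Triv

variable {C : Type u} [Category.{v} C] [Abelian C] (n : ℕ)

/-- Objects of the trivial ("split") `n`-extension `0 → B → B → 0 → ⋯ → 0 → A → A → 0`. -/
noncomputable def trivX (A B : C) : ℕ → C :=
  fun i => if i ≤ 1 then B else if n ≤ i then A else 0

/-- The trivial `n`-extension of `A` by `B` (for `2 ≤ n`). -/
noncomputable def trivPreExt (hn : 2 ≤ n) (A B : C) : PreExt C n where
  X := trivX n A B
  d i :=
    if h : i = 0 then eqToHom (by subst h; simp [trivX]) else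
    if h' : i = n then eqToHom (by
      subst h'; simp only [trivX]
      rw [if_neg (by omega), if_pos (by omega), if_neg (by omega), if_pos (by omega)]) else
    0

/-- The Yoneda class of the extension `E` is zero, i.e. `E` is Yoneda equivalent
to the trivial extension. -/
def PreExt.classZero (hn : 2 ≤ n) (E : PreExt C n) : Prop :=
  PreExt.YEquiv E (trivPreExt n hn (E.X (n + 1)) (E.X 0))

end Triv

namespace YonedaAux

open HomologicalComplex

variable {C : Type u} [Category.{v} C] [Abelian C]

/-! ### Disks -/

/-- The contractible complex with `X` in degrees `j` and `j+1`. -/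
noncomputable def disk (X : C) (j : ℕ) : CochainComplex C ℕ :=
  double (𝟙 X) (show (ComplexShape.up ℕ).Rel j (j + 1) from rfl)

noncomputable def disk0 (X : C) (j : ℕ) : (disk X j).X j ≅ X := doubleXIso₀ _ _

noncomputable def disk1 (X : C) (j : ℕ) : (disk X j).X (j + 1) ≅ X :=
  doubleXIso₁ _ _ (by simp)

lemma disk_d (X : C) (j : ℕ) :
    (disk X j).d j (j + 1) = (disk0 X j).hom ≫ (disk1 X j).inv := by
  have := double_d (𝟙 X) (show (ComplexShape.up ℕ).Rel j (j + 1) from rfl) (by simp)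
  rw [Category.id_comp] at this
  exact this

instance (X : C) (j : ℕ) : IsIso ((disk X j).d j (j + 1)) := by
  rw [disk_d]; infer_instance

lemma disk_isZero (X : C) (j k : ℕ) (h0 : k ≠ j) (h1 : k ≠ j + 1) :
    IsZero ((disk X j).X k) := isZero_double_X _ _ _ h0 h1

lemma exactAt_iff_nat (K : CochainComplex C ℕ) (i : ℕ) :
    K.ExactAt (i + 1) ↔
      (ShortComplex.mk (K.d i (i + 1)) (K.d (i + 1) (i + 1 + 1)) (K.d_comp_d _ _ _)).Exact :=
  K.exactAt_iff' i (i + 1) (i + 1 + 1) (by simp) (by simp)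

lemma exactAt_zero_iff (K : CochainComplex C ℕ) :
    K.ExactAt 0 ↔ Mono (K.d 0 1) := by
  rw [K.exactAt_iff' 0 0 1 (by simp) (by simp)]
  exact ShortComplex.exact_iff_mono _ (K.shape _ _ (by simp))

lemma disk_acyclic (X : C) (j : ℕ) : (disk X j).Acyclic := by
  intro k
  by_cases h0 : k = j
  · subst h0
    cases k with
    | zero => rw [exactAt_zero_iff]; infer_instance
    | succ k =>
      rw [exactAt_iff_nat]
      exact (ShortComplex.exact_iff_mono _
        ((disk_isZero X (k + 1) k (by simp) (by omega)).eq_of_src _ _)).2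
        (by dsimp; infer_instance)
  · by_cases h1 : k = j + 1
    · subst h1
      rw [exactAt_iff_nat]
      exact (ShortComplex.exact_iff_epi _
        ((disk_isZero X j (j + 1 + 1) (by omega) (by omega)).eq_of_tgt _ _)).2
        (by dsimp; infer_instance)
    · exact ShortComplex.exact_of_isZero_X₂ _ (disk_isZero X j k h0 h1)

open scoped Classical in
/-- Morphisms to a disk. -/
noncomputable def toDisk (K : CochainComplex C ℕ) {X : C} (j : ℕ) (φ : K.X (j + 1) ⟶ X) :
    K ⟶ disk X j where
  f k :=
    if h0 : k = j then
      eqToHom (by rw [h0]) ≫ K.d j (j + 1) ≫ φ ≫ (disk0 X j).inv ≫ eqToHom (by rw [h0])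
    else if h1 : k = j + 1 then
      eqToHom (by rw [h1]) ≫ φ ≫ (disk1 X j).inv ≫ eqToHom (by rw [h1])
    else 0
  comm' k l hkl := by
    obtain rfl : k + 1 = l := hkl
    by_cases h0 : k = j
    · subst h0
      simp [disk_d]
    · by_cases h1 : k + 1 = j
      · subst h1
        rw [dif_pos rfl]
        rw [(disk_isZero X (k + 1) k (by omega) (by omega)).eq_of_src ((disk X (k+1)).d k (k+1)) 0]
        simp
      · exact (disk_isZero X j (k + 1) h1 (by omega)).eq_of_tgt _ _

@[simp]
lemma toDisk_f1 (K : CochainComplex C ℕ) {X : C} (j : ℕ) (φ : K.X (j + 1) ⟶ X) :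
    (toDisk K j φ).f (j + 1) = φ ≫ (disk1 X j).inv := by
  simp [toDisk]

@[simp]
lemma toDisk_f0 (K : CochainComplex C ℕ) {X : C} (j : ℕ) (φ : K.X (j + 1) ⟶ X) :
    (toDisk K j φ).f j = K.d j (j + 1) ≫ φ ≫ (disk0 X j).inv := by
  simp [toDisk]

lemma toDisk_ext {K : CochainComplex C ℕ} {X : C} {j : ℕ} {f g : K ⟶ disk X j}
    (h : f.f (j + 1) = g.f (j + 1)) : f = g := by
  have e : f.f j ≫ (disk X j).d j (j + 1) = g.f j ≫ (disk X j).d j (j + 1) := by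
    rw [f.comm, g.comm, h]
  have hm : Mono ((disk X j).d j (j + 1)) := IsIso.mono_of_iso _
  have h0 : f.f j = g.f j := (cancel_mono ((disk X j).d j (j + 1))).1 e
  exact to_double_hom_ext h0 h

/-! ### Acyclicity -/

lemma quasiIso_of_acyclic {K L : CochainComplex C ℕ} (f : K ⟶ L) (hK : K.Acyclic)
    (hL : L.Acyclic) : QuasiIso f where
  quasiIsoAt i := by
    rw [quasiIsoAt_iff_exactAt _ _ (hK i)]
    exact hL i

lemma biprod_acyclic {K L : CochainComplex C ℕ} (hK : K.Acyclic) (hL : L.Acyclic) :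
    (K ⊞ L).Acyclic :=
  (ShortComplex.Splitting.ofHasBinaryBiproduct K L).shortExact.acyclic_X₂ hK hL

lemma isPushout_acyclic {K L M N : CochainComplex C ℕ} {f : K ⟶ L} {g : K ⟶ M} {i : L ⟶ N}
    {j : M ⟶ N} (sq : IsPushout f g i j) [Mono f] (hK : K.Acyclic) (hL : L.Acyclic)
    (hM : M.Acyclic) : N.Acyclic := by
  have h0 : Mono (biprod.lift f (-g)) := mono_of_mono_fac (biprod.lift_fst f (-g))
  have h1 : Mono sq.shortComplex.f := h0
  have h2 : Epi sq.shortComplex.g := sq.epi_shortComplex_g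
  have hS : sq.shortComplex.ShortExact := { exact := sq.exact_shortComplex }
  exact hS.acyclic_X₃ (quasiIso_of_acyclic _ hK (biprod_acyclic hL hM))

lemma isPullback_acyclic {K L M N : CochainComplex C ℕ} {f : K ⟶ L} {g : K ⟶ M} {i : L ⟶ N}
    {j : M ⟶ N} (sq : IsPullback f g i j) [Epi i] (hN : N.Acyclic) (hL : L.Acyclic)
    (hM : M.Acyclic) : K.Acyclic := by
  have h1 : Mono sq.shortComplex'.f := sq.mono_shortComplex'_f
  have h0 : Epi (biprod.desc i (-j)) := epi_of_epi_fac (biprod.inl_desc i (-j))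
  have h2 : Epi sq.shortComplex'.g := h0
  have hS : sq.shortComplex'.ShortExact := { exact := sq.exact_shortComplex' }
  exact hS.acyclic_X₁ (quasiIso_of_acyclic _ (biprod_acyclic hL hM) hN)

lemma kernel_acyclic {L M : CochainComplex C ℕ} (p : L ⟶ M) [Epi p] (hL : L.Acyclic)
    (hM : M.Acyclic) : (kernel p).Acyclic := by
  have hS : (ShortComplex.mk (kernel.ι p) p (by simp)).ShortExact :=
    { exact := ShortComplex.exact_of_f_is_kernel _ (kernelIsKernel p) }
  exact hS.acyclic_X₁ (quasiIso_of_acyclic _ hL hM)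

/-! ### Good maps -/

/-- isomorphism in degree zero and degrees above `n` -/
def Good (n : ℕ) {K L : CochainComplex C ℕ} (f : K ⟶ L) : Prop :=
  IsIso (f.f 0) ∧ ∀ i, n < i → IsIso (f.f i)

lemma Good.comp {n : ℕ} {K L M : CochainComplex C ℕ} {f : K ⟶ L} {g : L ⟶ M}
    (hf : Good n f) (hg : Good n g) : Good n (f ≫ g) := by
  refine ⟨?_, fun i hi => ?_⟩
  · have := hf.1
    have := hg.1
    rw [comp_f]; infer_instance
  · have := hf.2 i hi
    have := hg.2 i hi
    rw [comp_f]; infer_instance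

/-- acyclic complexes vanishing in degrees above `n` -/
def Tail (n : ℕ) (K : CochainComplex C ℕ) : Prop :=
  K.Acyclic ∧ ∀ i, n < i → IsZero (K.X i)

lemma isIso_inl_f {K D : CochainComplex C ℕ} (i : ℕ) (h : IsZero (D.X i)) :
    IsIso ((biprod.inl : K ⟶ K ⊞ D).f i) := by
  refine ⟨(biprod.fst : K ⊞ D ⟶ K).f i, by simp [← comp_f], ?_⟩
  have h2 : (biprod.snd : K ⊞ D ⟶ D).f i = 0 := h.eq_of_tgt _ _
  have h3 := congrArg (fun q => q.f i) (biprod.total (X := K) (Y := D))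
  rw [← id_f, ← h3]
  simp only [add_f_apply, comp_f, h2, zero_comp, add_zero]

lemma mono_step (n k : ℕ) (hk : 1 ≤ k) (hkn : k ≤ n) {E E' : CochainComplex C ℕ} (f : E ⟶ E')
    (hf : Good n f) (hE' : E'.Acyclic) :
    ∃ (E'' : CochainComplex C ℕ) (a : E' ⟶ E'') (b : E ⟶ E''), E''.Acyclic ∧ Good n a ∧ Good n b ∧
      ∀ i, 2 ≤ i → i ≤ k → Mono (b.f i) := by
  induction k, hk using Nat.le_induction with
  | base =>
    refine ⟨E', 𝟙 _, f, hE', ⟨?_, fun i _ => ?_⟩, hf, fun i _ _ => by omega⟩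
    · rw [id_f]; infer_instance
    · rw [id_f]; infer_instance
  | succ k hk ih =>
    obtain ⟨E2, a, b, hE2, ha, hb, hm⟩ := ih (by omega)
    have hinl : Good n (biprod.inl : E2 ⟶ E2 ⊞ disk (E.X (k + 1)) k) :=
      ⟨isIso_inl_f _ (disk_isZero _ _ _ (by omega) (by omega)),
        fun i hi => isIso_inl_f _ (disk_isZero _ _ _ (by omega) (by omega))⟩
    refine ⟨E2 ⊞ disk (E.X (k + 1)) k, a ≫ biprod.inl, biprod.lift b (toDisk E k (𝟙 _)),
      biprod_acyclic hE2 (disk_acyclic _ _), ha.comp hinl, ?_, ?_⟩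
    · have key : ∀ i, IsIso (b.f i) → IsIso ((biprod.inl : E2 ⟶ E2 ⊞ disk (E.X (k + 1)) k).f i) →
          IsIso ((biprod.lift b (toDisk E k (𝟙 _)) : E ⟶ E2 ⊞ disk (E.X (k + 1)) k).f i) := by
        intro i h1 h2
        have h3 : (biprod.inl : E2 ⟶ E2 ⊞ disk (E.X (k + 1)) k).f i ≫
            (biprod.fst : E2 ⊞ disk (E.X (k + 1)) k ⟶ E2).f i = 𝟙 _ := by simp [← comp_f]
        have h4 : IsIso ((biprod.fst : E2 ⊞ disk (E.X (k + 1)) k ⟶ E2).f i) := by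
          rw [← IsIso.inv_eq_of_hom_inv_id h3]; infer_instance
        have h5 : (biprod.lift b (toDisk E k (𝟙 _)) : E ⟶ E2 ⊞ disk (E.X (k + 1)) k).f i ≫
            (biprod.fst : E2 ⊞ disk (E.X (k + 1)) k ⟶ E2).f i = b.f i := by simp [← comp_f]
        rw [← h5] at h1
        exact IsIso.of_isIso_comp_right _ ((biprod.fst : E2 ⊞ disk (E.X (k + 1)) k ⟶ E2).f i)
      exact ⟨key 0 hb.1 hinl.1, fun i hi => key i (hb.2 i hi) (hinl.2 i hi)⟩
    · intro i h1 h2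
      by_cases h : i = k + 1
      · subst h
        have h5 : (biprod.lift b (toDisk E k (𝟙 _)) : E ⟶ E2 ⊞ disk (E.X (k + 1)) k).f (k + 1) ≫
          (biprod.snd : E2 ⊞ disk (E.X (k + 1)) k ⟶ _).f (k + 1) = (disk1 _ k).inv := by
            rw [← comp_f, biprod.lift_snd, toDisk_f1, Category.id_comp]
        exact mono_of_mono_fac h5
      · have h5 : (biprod.lift b (toDisk E k (𝟙 _)) : E ⟶ E2 ⊞ disk (E.X (k + 1)) k).f i ≫
            (biprod.fst : E2 ⊞ disk (E.X (k + 1)) k ⟶ E2).f i = b.f i := by simp [← comp_f]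
        have := hm i h1 (by omega)
        exact mono_of_mono_fac h5

lemma exists_mono (n : ℕ) (hn : 2 ≤ n) {E E' : CochainComplex C ℕ} (f : E ⟶ E')
    (hf : Good n f) (hE : E.Acyclic) (hE' : E'.Acyclic) :
    ∃ (E'' : CochainComplex C ℕ) (a : E' ⟶ E'') (b : E ⟶ E''), E''.Acyclic ∧ Good n a ∧ Good n b ∧
      Mono b := by
  obtain ⟨E2, a, b, hE2, ha, hb, hm⟩ := mono_step n n (by omega) le_rfl f hf hE'
  refine ⟨E2, a, b, hE2, ha, hb, ?_⟩
  have : ∀ i, Mono (b.f i) := by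
    intro i
    match i with
    | 0 => have := hb.1; infer_instance
    | 1 =>
      rw [Preadditive.mono_iff_cancel_zero]
      intro P x hx
      have m2 := hm 2 le_rfl hn
      have h1 : x ≫ E.d 1 2 = 0 := by
        rw [← cancel_mono (b.f 2), Category.assoc, ← b.comm, reassoc_of% hx]
        simp
      have hex := (exactAt_iff_nat E 0).1 (hE 1)
      obtain ⟨A, π, hπ, y, hy⟩ := hex.exact_up_to_refinements x h1
      dsimp at y hy
      have hmono := (exactAt_zero_iff E2).1 (hE2 0)
      have hy0 : y = 0 := by
        have := hb.1
        have hm0 : Mono (b.f 0 ≫ E2.d 0 1) := inferInstance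
        rw [← cancel_mono (b.f 0 ≫ E2.d 0 1), b.comm]
        have := congrArg (fun q => q ≫ b.f 1) hy
        simp only [Category.assoc, hx] at this
        simpa using this.symm
      rw [← cancel_epi π, hy, hy0]
      simp
    | (i + 2) =>
      by_cases h : i + 2 ≤ n
      · exact hm _ (by omega) h
      · have := hb.2 (i + 2) (by omega)
        infer_instance
  exact HomologicalComplex.mono_of_mono_f b this

lemma ore (n : ℕ) (hn : 2 ≤ n) {E E' G : CochainComplex C ℕ} (f : E ⟶ E') (g : E ⟶ G)
    (hf : Good n f) (hg : Good n g) (hE : E.Acyclic) (hE' : E'.Acyclic) (hG : G.Acyclic) :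
    ∃ (G' : CochainComplex C ℕ) (a : E' ⟶ G') (b : G ⟶ G'), G'.Acyclic ∧ Good n a ∧ Good n b := by
  obtain ⟨E2, a, b, hE2, ha, hb, hm⟩ := exists_mono n hn f hf hE hE'
  have sq := IsPushout.of_hasPushout b g
  have sqi := fun i => sq.map (eval C (ComplexShape.up ℕ) i)
  refine ⟨pushout b g, a ≫ pushout.inl b g, pushout.inr b g, isPushout_acyclic sq hE hE2 hG,
    ha.comp ⟨?_, fun i hi => ?_⟩, ?_, fun i hi => ?_⟩
  · have := hg.1
    exact (sqi 0).isIso_inl_of_isIso (by exact this)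
  · have := hg.2 i hi
    exact (sqi i).isIso_inl_of_isIso (by exact this)
  · have := hb.1
    exact (sqi 0).isIso_inr_of_isIso (by exact this)
  · have := hb.2 i hi
    exact (sqi i).isIso_inr_of_isIso (by exact this)

/-! ### The split condition and the lifting condition on complexes -/

/-- `K` maps to a complex with a section of the last differential. -/
def SK (n : ℕ) (K : CochainComplex C ℕ) : Prop :=
  ∃ (G : CochainComplex C ℕ) (f : K ⟶ G) (s : G.X (n + 1) ⟶ G.X n),
    G.Acyclic ∧ Good n f ∧ s ≫ G.d n (n + 1) = 𝟙 _

lemma SK.precomp {n : ℕ} {K L : CochainComplex C ℕ} (h : SK n L) (f : K ⟶ L) (hf : Good n f) :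
    SK n K := by
  obtain ⟨G, g, s, hG, hg, hs⟩ := h
  exact ⟨G, f ≫ g, s, hG, hf.comp hg, hs⟩

lemma SK.push {n : ℕ} (hn : 2 ≤ n) {K L : CochainComplex C ℕ} (h : SK n K) (f : K ⟶ L)
    (hf : Good n f) (hK : K.Acyclic) (hL : L.Acyclic) : SK n L := by
  obtain ⟨G, g, s, hG, hg, hs⟩ := h
  obtain ⟨G', a, b, hG', ha, hb⟩ := ore n hn f g hf hg hK hL hG
  have := hb.2 (n + 1) (by omega)
  refine ⟨G', a, inv (b.f (n + 1)) ≫ s ≫ b.f n, hG', ha, ?_⟩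
  simp only [Category.assoc, b.comm, reassoc_of% hs, IsIso.inv_hom_id]

/-- The lifting condition. -/
def PK (n : ℕ) (K : CochainComplex C ℕ) : Prop :=
  ∃ (F : CochainComplex C ℕ) (f : K ⟶ F), Tail n F ∧ IsIso (f.f 0) ∧ IsIso (f.f n)

lemma isIso_of_isZero' {X Y : C} (f : X ⟶ Y) (hX : IsZero X) (hY : IsZero Y) : IsIso f :=
  ⟨0, hX.eq_of_src _ _, hY.eq_of_src _ _⟩

lemma PK.toSK {n : ℕ} (hn : 2 ≤ n) {K : CochainComplex C ℕ} (hK : Tail (n + 1) K)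
    (h : PK n K) : SK n K := by
  obtain ⟨F, f, hF, h0, h1⟩ := h
  let D := disk (K.X (n + 1)) n
  let g : K ⟶ F ⊞ D := biprod.lift f (toDisk K n (𝟙 _))
  have hfst : ∀ i, (biprod.inl : F ⟶ F ⊞ D).f i ≫ (biprod.fst : F ⊞ D ⟶ F).f i = 𝟙 _ := by
    intro i; simp [← comp_f]
  have hsnd : ∀ i, (biprod.inr : D ⟶ F ⊞ D).f i ≫ (biprod.snd : F ⊞ D ⟶ D).f i = 𝟙 _ := by
    intro i; simp [← comp_f]
  have hgf : ∀ i, g.f i ≫ (biprod.fst : F ⊞ D ⟶ F).f i = f.f i := by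
    intro i; simp [g, ← comp_f]
  have hgs : ∀ i, g.f i ≫ (biprod.snd : F ⊞ D ⟶ D).f i = (toDisk K n (𝟙 _)).f i := by
    intro i; simp [g, ← comp_f]
  have htot : ∀ i, (biprod.fst : F ⊞ D ⟶ F).f i ≫ (biprod.inl : F ⟶ F ⊞ D).f i +
      (biprod.snd : F ⊞ D ⟶ D).f i ≫ (biprod.inr : D ⟶ F ⊞ D).f i = 𝟙 _ := by
    intro i
    have h3 := congrArg (fun q => q.f i) (biprod.total (X := F) (Y := D))
    rw [← id_f, ← h3]
    simp only [add_f_apply, comp_f]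
  have hsndiso : ∀ i, n < i → IsIso ((biprod.snd : F ⊞ D ⟶ D).f i) := by
    intro i hi
    refine ⟨(biprod.inr : D ⟶ F ⊞ D).f i, ?_, hsnd i⟩
    rw [← htot i, (hF.2 i hi).eq_of_tgt ((biprod.fst : F ⊞ D ⟶ F).f i) 0]
    simp
  have hdi : ∀ i, n < i → IsIso ((toDisk K n (𝟙 _)).f i) := by
    intro i hi
    by_cases h : i = n + 1
    · subst h
      rw [toDisk_f1]; infer_instance
    · exact isIso_of_isZero' _ (hK.2 _ (by omega)) (disk_isZero _ _ _ (by omega) (by omega))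
  refine ⟨F ⊞ D, g, (biprod.snd : F ⊞ D ⟶ D).f (n + 1) ≫ (disk1 _ n).hom ≫ (disk0 _ n).inv ≫
    (biprod.inr : D ⟶ F ⊞ D).f n, biprod_acyclic hF.1 (disk_acyclic _ _), ⟨?_, fun i hi => ?_⟩, ?_⟩
  · have hi : IsIso ((biprod.inl : F ⟶ F ⊞ D).f 0) :=
      isIso_inl_f _ (disk_isZero _ _ _ (by omega) (by omega))
    have : IsIso ((biprod.fst : F ⊞ D ⟶ F).f 0) := by
      rw [← IsIso.inv_eq_of_hom_inv_id (hfst 0)]; infer_instance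
    rw [← hgf] at h0
    exact IsIso.of_isIso_comp_right _ ((biprod.fst : F ⊞ D ⟶ F).f 0)
  · have := hdi i hi
    have := hsndiso i hi
    rw [← hgs] at *
    exact IsIso.of_isIso_comp_right _ ((biprod.snd : F ⊞ D ⟶ D).f i)
  · have := hsndiso (n + 1) (by omega)
    have e := disk_d (K.X (n + 1)) n
    simp only [Category.assoc, Hom.comm]
    rw [show D.d n (n + 1) = _ from e]
    simp only [Iso.inv_hom_id_assoc, Category.assoc, Iso.hom_inv_id_assoc]
    rw [← cancel_mono ((biprod.snd : F ⊞ D ⟶ D).f (n + 1))]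
    simp [hsnd]

lemma SK.toPK {n : ℕ} (hn : 2 ≤ n) {K : CochainComplex C ℕ} (hK : Tail (n + 1) K)
    (h : SK n K) : PK n K := by
  obtain ⟨G, f, s, hG, hf, hs⟩ := h
  obtain ⟨m, rfl⟩ : ∃ m, n = m + 1 := ⟨n - 1, by omega⟩
  have hGz : ∀ i, m + 2 < i → IsZero (G.X i) := by
    intro i hi
    have := hf.2 i (by omega)
    exact (hK.2 i hi).of_iso (asIso (f.f i)).symm
  -- split off the disk
  let D := disk (G.X (m + 2)) (m + 1)
  let p : G ⟶ D := toDisk G (m + 1) (𝟙 _)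
  let σ : D ⟶ G := mkHomFromDouble _ (by simp) s (s ≫ G.d (m + 1) (m + 2)) (by simp) (by simp)
  have hσ : σ.f (m + 2) = (disk1 _ (m + 1)).hom := by
    have : σ.f (m + 2) = (disk1 _ (m + 1)).hom ≫ s ≫ G.d (m + 1) (m + 2) :=
      mkHomFromDouble_f₁ ..
    rw [this, hs, Category.comp_id]
  have hσp : σ ≫ p = 𝟙 _ := by
    apply toDisk_ext
    rw [comp_f, toDisk_f1, id_f]
    erw [hσ]
    simp
  have hp : Epi p := epi_of_epi_fac hσp
  let R := kernel p
  have hR : R.Acyclic := kernel_acyclic p hG (disk_acyclic _ _)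
  have hιm : ∀ i, Mono ((kernel.ι p).f i) := fun i => inferInstance
  have hιp : ∀ i, (kernel.ι p).f i ≫ p.f i = 0 := by
    intro i; rw [← comp_f, kernel.condition, zero_f]
  have hRz : ∀ i, m + 1 < i → IsZero (R.X i) := by
    intro i hi
    have hz : (kernel.ι p).f i = 0 := by
      by_cases h : i = m + 2
      · subst h
        have e := hιp (m + 2)
        have : IsIso (p.f (m + 2)) := by
          have : p.f (m + 2) = 𝟙 _ ≫ (disk1 _ (m + 1)).inv := toDisk_f1 ..
          rw [this]; infer_instance
        rw [← cancel_mono (p.f (m + 2)), e, zero_comp]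
      · exact (hGz i (by omega)).eq_of_tgt _ _
    have := hιm i
    rw [IsZero.iff_id_eq_zero, ← cancel_mono ((kernel.ι p).f i), hz]
    simp
  let ρ : G ⟶ R := kernel.lift p (𝟙 _ - p ≫ σ) (by simp [Preadditive.sub_comp, hσp])
  have hρ : ρ ≫ kernel.ι p = 𝟙 _ - p ≫ σ := kernel.lift_ι _ _ _
  have hιρ : kernel.ι p ≫ ρ = 𝟙 _ := by
    rw [← cancel_mono (kernel.ι p), Category.assoc, hρ]
    simp [Preadditive.comp_sub]
  have hρ0 : IsIso (ρ.f 0) := by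
    refine ⟨(kernel.ι p).f 0, ?_, by rw [← comp_f, hιρ, id_f]⟩
    rw [← comp_f, hρ, sub_f_apply, comp_f,
      (disk_isZero _ _ 0 (by omega) (by omega)).eq_of_tgt (p.f 0) 0]
    simp
  let g : K ⟶ R := f ≫ ρ
  have hg0 : IsIso (g.f 0) := by
    have := hf.1
    simp only [g, comp_f]; infer_instance
  -- pull back
  let u : R ⟶ disk (R.X (m + 1)) m := toDisk R m (𝟙 _)
  let w : disk (K.X (m + 1)) m ⟶ disk (R.X (m + 1)) m :=
    toDisk _ m ((disk1 _ m).hom ≫ g.f (m + 1))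
  have hu1 : IsIso (u.f (m + 1)) := by
    simp only [u, toDisk_f1]; infer_instance
  have hu : ∀ i, Epi (u.f i) := by
    intro i
    by_cases h : i = m + 1
    · subst h; infer_instance
    · by_cases h' : i = m
      · subst h'
        have hex := (exactAt_iff_nat R i).1 (hR (i + 1))
        have : Epi (R.d i (i + 1)) :=
          (ShortComplex.exact_iff_epi _ ((hRz (i + 1 + 1) (by omega)).eq_of_tgt _ _)).1 hex
        simp only [u, toDisk_f0]; infer_instance
      · have hz := disk_isZero (R.X (m + 1)) m i h' h
        exact ⟨fun _ _ _ => hz.eq_of_src _ _⟩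
  have hue : Epi u := HomologicalComplex.epi_of_epi_f u hu
  have sq := IsPullback.of_hasPullback u w
  have sqi := fun i => sq.map (eval C (ComplexShape.up ℕ) i)
  have hcomm : g ≫ u = toDisk K m (𝟙 _) ≫ w := by
    apply toDisk_ext
    simp [u, w]
  have hfst : ∀ i, i ≠ m → i ≠ m + 1 → IsIso ((pullback.fst u w).f i) := by
    intro i h1 h2
    exact (sqi i).isIso_fst_of_isIso
      (isIso_of_isZero' _ (disk_isZero _ _ _ h1 h2) (disk_isZero _ _ _ h1 h2))
  have hsnd : IsIso ((pullback.snd u w).f (m + 1)) :=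
    (sqi (m + 1)).isIso_snd_of_isIso hu1
  refine ⟨pullback u w, pullback.lift g (toDisk K m (𝟙 _)) hcomm,
    ⟨isPullback_acyclic sq (disk_acyclic _ _) hR (disk_acyclic _ _), fun i hi => ?_⟩, ?_, ?_⟩
  · have := hfst i (by omega) (by omega)
    exact (hRz i hi).of_iso (asIso ((pullback.fst u w).f i))
  · have := hfst 0 (by omega) (by omega)
    have e : (pullback.lift g (toDisk K m (𝟙 _)) hcomm).f 0 ≫ (pullback.fst u w).f 0 = g.f 0 := by
      rw [← comp_f, pullback.lift_fst]
    rw [← e] at hg0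
    exact IsIso.of_isIso_comp_right _ ((pullback.fst u w).f 0)
  · have e : (pullback.lift g (toDisk K m (𝟙 _)) hcomm).f (m + 1) ≫
        (pullback.snd u w).f (m + 1) = (disk1 _ m).inv := by
      rw [← comp_f, pullback.lift_snd, toDisk_f1, Category.id_comp]
    have h3 : IsIso ((pullback.lift g (toDisk K m (𝟙 _)) hcomm).f (m + 1) ≫
        (pullback.snd u w).f (m + 1)) := by rw [e]; infer_instance
    exact IsIso.of_isIso_comp_right _ ((pullback.snd u w).f (m + 1))

/-! ### Comparison of complexes and sequences -/

/-- `K` is isomorphic to `E` in degrees `≤ n + 1`. -/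
structure Rep {n : ℕ} (E : PreExt C n) (K : CochainComplex C ℕ) where
  e : ∀ i, i ≤ n + 1 → (K.X i ≅ E.X i)
  hd : ∀ i (h : i ≤ n), K.d i (i + 1) = (e i (by omega)).hom ≫ E.d i ≫ (e (i + 1) (by omega)).inv

lemma exact_of_iso_maps {X Y Z X' Y' Z' : C} {f : X ⟶ Y} {g : Y ⟶ Z} {f' : X' ⟶ Y'} {g' : Y' ⟶ Z'}
    (a : X' ≅ X) (b : Y' ≅ Y) (c : Z' ≅ Z) (hf : f' = a.hom ≫ f ≫ b.inv)
    (hg : g' = b.hom ≫ g ≫ c.inv) (h : ∃ w : f ≫ g = 0, (ShortComplex.mk f g w).Exact) :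
    ∃ w : f' ≫ g' = 0, (ShortComplex.mk f' g' w).Exact := by
  obtain ⟨w, hw⟩ := h
  have w' : f' ≫ g' = 0 := by
    rw [hf, hg]
    simp [reassoc_of% w]
  refine ⟨w', ?_⟩
  exact ShortComplex.exact_of_iso (ShortComplex.isoMk a.symm b.symm c.symm
    (by simp [hf]) (by simp [hg])) hw

lemma exists_rep {n : ℕ} (E : PreExt C n) (hE : E.IsExt) :
    ∃ K : CochainComplex C ℕ, Tail (n + 1) K ∧ Nonempty (Rep E K) := by
  have h : ∀ i, ∃ Y : C, (i ≤ n + 1 → Nonempty (Y ≅ E.X i)) ∧ (n + 1 < i → IsZero Y) := by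
    intro i
    by_cases hi : i ≤ n + 1
    · exact ⟨E.X i, fun _ => ⟨Iso.refl _⟩, fun _ => by omega⟩
    · exact ⟨0, fun _ => by omega, fun _ => isZero_zero C⟩
  choose Y e hz using h
  let e' := fun i hi => (e i hi).some
  let d : ∀ i, Y i ⟶ Y (i + 1) := fun i =>
    if h : i ≤ n then (e' i (by omega)).hom ≫ E.d i ≫ (e' (i + 1) (by omega)).inv else 0
  have hd : ∀ i (h : i ≤ n),
      d i = (e' i (by omega)).hom ≫ E.d i ≫ (e' (i + 1) (by omega)).inv :=
    fun i h => dif_pos h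
  have hdex : ∀ i, i + 1 ≤ n → ∃ w : d i ≫ d (i + 1) = 0,
      (ShortComplex.mk (d i) (d (i + 1)) w).Exact := by
    intro i hi
    exact exact_of_iso_maps _ _ _ (hd i (by omega)) (hd (i + 1) hi) (hE.2.2 i hi)
  have hdd : ∀ i, d i ≫ d (i + 1) = 0 := by
    intro i
    by_cases h : i + 1 ≤ n
    · exact (hdex i h).1
    · exact (hz (i + 1 + 1) (by omega)).eq_of_tgt _ _
  let K := CochainComplex.of Y d hdd
  have hKd : ∀ i, K.d i (i + 1) = d i := fun i => CochainComplex.of_d ..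
  refine ⟨K, ⟨?_, fun i hi => hz i hi⟩, ⟨⟨e', fun i h => (hKd i).trans (hd i h)⟩⟩⟩
  intro i
  cases i with
  | zero =>
    rw [exactAt_zero_iff]
    have h0 : K.d 0 1 = _ := (hKd 0).trans (hd 0 (by omega))
    have := hE.1
    rw [h0]
    infer_instance
  | succ i =>
    rw [exactAt_iff_nat]
    by_cases h : i + 1 ≤ n
    · obtain ⟨w, hw⟩ := hdex i h
      convert hw using 2
      · exact hKd i
      · exact hKd (i + 1)
    · by_cases h' : i = n
      · subst h'
        refine (ShortComplex.exact_iff_epi _ ((hz (i + 1 + 1) (by omega)).eq_of_tgt _ _)).2 ?_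
        have h0 : K.d i (i + 1) = _ := (hKd i).trans (hd i (by omega))
        have := hE.2.1
        dsimp only
        rw [h0]
        infer_instance
      · exact ShortComplex.exact_of_isZero_X₂ _ (hz (i + 1) (by omega))

lemma exists_map {n n' : ℕ} (hnn : n' ≤ n) {E : PreExt C n} {F : PreExt C n'}
    {K L : CochainComplex C ℕ} (r : Rep E K) (t : Rep F L) (hL : Tail (n' + 1) L)
    (φ : ∀ i, E.X i ⟶ F.X i) (hφ : ∀ i, i ≤ n' → E.d i ≫ φ (i + 1) = φ i ≫ F.d i) :
    ∃ f : K ⟶ L, ∀ i (h : i ≤ n' + 1), f.f i = (r.e i (by omega)).hom ≫ φ i ≫ (t.e i h).inv := by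
  let f : ∀ i, K.X i ⟶ L.X i := fun i =>
    if h : i ≤ n' + 1 then (r.e i (by omega)).hom ≫ φ i ≫ (t.e i h).inv else 0
  have hf : ∀ i (h : i ≤ n' + 1), f i = (r.e i (by omega)).hom ≫ φ i ≫ (t.e i h).inv :=
    fun i h => dif_pos h
  refine ⟨⟨f, ?_⟩, hf⟩
  rintro i j hij
  obtain rfl : i + 1 = j := hij
  by_cases h : i ≤ n'
  · rw [hf i (by omega), hf (i + 1) (by omega), r.hd i (by omega), t.hd i h]
    simp only [Category.assoc, Iso.inv_hom_id_assoc]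
    rw [reassoc_of% (hφ i h)]
  · exact (hL.2 (i + 1) (by omega)).eq_of_tgt _ _

/-- The sequence underlying a complex. -/
def ofCx (n : ℕ) (K : CochainComplex C ℕ) : PreExt C n where
  X := K.X
  d i := K.d i (i + 1)

lemma ofCx_isExt (n : ℕ) (K : CochainComplex C ℕ) (hK : Tail (n + 1) K) : (ofCx n K).IsExt := by
  refine ⟨(exactAt_zero_iff K).1 (hK.1 0), ?_, fun i hi => ⟨K.d_comp_d _ _ _, ?_⟩⟩
  · exact (ShortComplex.exact_iff_epi _ ((hK.2 (n + 1 + 1) (by omega)).eq_of_tgt _ _)).1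
      ((exactAt_iff_nat K n).1 (hK.1 (n + 1)))
  · exact (exactAt_iff_nat K i).1 (hK.1 (i + 1))

/-- Replacing some objects by isomorphic ones. -/
lemma fixup0 {n m k : ℕ} {E : PreExt C n} (H : PreExt C m) (hH : H.IsExt)
    (φ : ∀ i, E.X i ⟶ H.X i) (h0 : IsIso (φ 0)) (hk : IsIso (φ k)) :
    ∃ (H' : PreExt C m) (e : ∀ i, H'.X i ≅ H.X i), H'.IsExt ∧
      (∀ i, H'.d i = (e i).hom ≫ H.d i ≫ (e (i + 1)).inv) ∧
      (∃ h : E.X 0 = H'.X 0, φ 0 ≫ (e 0).inv = eqToHom h) ∧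
      (∃ h : E.X k = H'.X k, φ k ≫ (e k).inv = eqToHom h) := by
  have h : ∀ i, ∃ (Y : C) (e : Y ≅ H.X i), (i = 0 ∨ i = k) →
      ∃ h : E.X i = Y, φ i ≫ e.inv = eqToHom h := by
    intro i
    by_cases hi : i = 0 ∨ i = k
    · have : IsIso (φ i) := by
        rcases hi with rfl | rfl <;> assumption
      exact ⟨E.X i, asIso (φ i), fun _ => ⟨rfl, by simp⟩⟩
    · exact ⟨H.X i, Iso.refl _, fun h => absurd h hi⟩
  choose Y e he using h
  refine ⟨⟨Y, fun i => (e i).hom ≫ H.d i ≫ (e (i + 1)).inv⟩, e, ⟨?_, ?_, fun i hi => ?_⟩,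
    fun i => rfl, he 0 (Or.inl rfl), he k (Or.inr rfl)⟩
  · have := hH.1
    dsimp only
    infer_instance
  · have := hH.2.1
    dsimp only
    infer_instance
  · exact exact_of_iso_maps _ _ _ rfl rfl (hH.2.2 i hi)

lemma fixup {n m k : ℕ} {E : PreExt C n} (G : CochainComplex C ℕ) (hG : Tail (m + 1) G)
    (φ : ∀ i, E.X i ⟶ G.X i) (h0 : IsIso (φ 0)) (hk : IsIso (φ k)) :
    ∃ (H' : PreExt C m) (e : ∀ i, H'.X i ≅ G.X i), H'.IsExt ∧
      (∀ i, H'.d i = (e i).hom ≫ G.d i (i + 1) ≫ (e (i + 1)).inv) ∧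
      (∃ h : E.X 0 = H'.X 0, φ 0 ≫ (e 0).inv = eqToHom h) ∧
      (∃ h : E.X k = H'.X k, φ k ≫ (e k).inv = eqToHom h) :=
  fixup0 (ofCx m G) (ofCx_isExt m G hG) φ h0 hk

/-- The split condition for sequences. -/
def SE {n : ℕ} (E : PreExt C n) : Prop :=
  ∃ K : CochainComplex C ℕ, Tail (n + 1) K ∧ Nonempty (Rep E K) ∧ SK n K

lemma exists_good_map {n : ℕ} {E F : PreExt C n} (h : PreExt.Ladder E F)
    {K L : CochainComplex C ℕ} (r : Rep E K) (t : Rep F L) (hK : Tail (n + 1) K)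
    (hL : Tail (n + 1) L) : ∃ f : K ⟶ L, Good n f := by
  obtain ⟨h0, h1, φ, hφ0, hφ1, hφ⟩ := h
  obtain ⟨f, hf⟩ := exists_map le_rfl r t hL φ hφ
  refine ⟨f, ?_, fun i hi => ?_⟩
  · rw [hf 0 (by omega), hφ0]; infer_instance
  · by_cases hi' : i = n + 1
    · subst hi'
      rw [hf (n + 1) le_rfl, hφ1]; infer_instance
    · exact isIso_of_isZero' _ (hK.2 _ (by omega)) (hL.2 _ (by omega))

lemma SE_iff_of_extRel {n : ℕ} (hn : 2 ≤ n) {E F : PreExt C n} (h : PreExt.ExtRel E F) :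
    SE E ↔ SE F := by
  obtain ⟨hE, hF, hEF⟩ := h
  constructor
  · rintro ⟨K, hK, ⟨r⟩, hS⟩
    obtain ⟨L, hL, ⟨t⟩⟩ := exists_rep F hF
    obtain ⟨f, hf⟩ := exists_good_map hEF r t hK hL
    exact ⟨L, hL, ⟨t⟩, hS.push hn f hf hK.1 hL.1⟩
  · rintro ⟨L, hL, ⟨t⟩, hS⟩
    obtain ⟨K, hK, ⟨r⟩⟩ := exists_rep E hE
    obtain ⟨f, hf⟩ := exists_good_map hEF r t hK hL
    exact ⟨K, hK, ⟨r⟩, hS.precomp f hf⟩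

lemma SE_iff_of_yEquiv {n : ℕ} (hn : 2 ≤ n) {E F : PreExt C n} (h : PreExt.YEquiv E F) :
    SE E ↔ SE F := by
  induction h with
  | rel x y h => exact SE_iff_of_extRel hn h
  | refl x => rfl
  | symm x y _ ih => exact ih.symm
  | trans x y z _ _ ih1 ih2 => exact ih1.trans ih2

/-! ### The trivial extension -/

section

variable (n : ℕ) (hn : 2 ≤ n) (A B : C)

lemma triv_d_zero : IsIso ((trivPreExt n hn A B).d 0) := by
  have : (trivPreExt n hn A B).d 0 = eqToHom (by simp [trivPreExt, trivX]) := by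
    simp [trivPreExt]
  rw [this]; infer_instance

lemma triv_d_last : IsIso ((trivPreExt n hn A B).d n) := by
  have : (trivPreExt n hn A B).d n = eqToHom (by
      simp only [trivPreExt, trivX]
      rw [if_neg (by omega), if_pos (by omega), if_neg (by omega), if_pos (by omega)]) := by
    simp only [trivPreExt]
    rw [dif_neg (by omega), dif_pos trivial]
  rw [this]; infer_instance

lemma triv_d_mid (i : ℕ) (h0 : i ≠ 0) (h1 : i ≠ n) : (trivPreExt n hn A B).d i = 0 := by
  simp only [trivPreExt]
  rw [dif_neg h0, dif_neg h1]
  rfl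

lemma triv_isZero (i : ℕ) (h0 : 1 < i) (h1 : i < n) : IsZero ((trivPreExt n hn A B).X i) := by
  simp only [trivPreExt, trivX]
  rw [if_neg (by omega), if_neg (by omega)]
  exact isZero_zero C

lemma triv_isExt : (trivPreExt n hn A B).IsExt := by
  have h0 := triv_d_zero n hn A B
  have h1 := triv_d_last n hn A B
  refine ⟨inferInstance, inferInstance, fun i hi => ?_⟩
  by_cases hi0 : i = 0
  · subst hi0
    have h2 := triv_d_mid n hn A B (0 + 1) (by omega) (by omega)
    refine ⟨by rw [h2, comp_zero], ?_⟩
    exact (ShortComplex.exact_iff_epi _ h2).2 (by dsimp only; infer_instance)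
  · have h2 := triv_d_mid n hn A B i hi0 (by omega)
    refine ⟨by rw [h2, zero_comp], ?_⟩
    by_cases hin : i + 1 = n
    · subst hin
      exact (ShortComplex.exact_iff_mono _ h2).2 (by dsimp only; infer_instance)
    · exact ShortComplex.exact_of_isZero_X₂ _ (triv_isZero n hn A B (i + 1) (by omega) (by omega))

lemma SE_triv : SE (trivPreExt n hn A B) := by
  obtain ⟨K, hK, ⟨r⟩⟩ := exists_rep _ (triv_isExt n hn A B)
  refine ⟨K, hK, ⟨r⟩, K, 𝟙 _, ?_⟩
  have h1 := triv_d_last n hn A B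
  refine ⟨(r.e (n + 1) le_rfl).hom ≫ inv ((trivPreExt n hn A B).d n) ≫ (r.e n (by omega)).inv,
    hK.1, ⟨?_, fun i hi => ?_⟩, ?_⟩
  · rw [id_f]; infer_instance
  · rw [id_f]; infer_instance
  · rw [r.hd n le_rfl]
    simp

lemma ladder_triv {G : PreExt C n} (hG : G.IsExt) (hA : A = G.X (n + 1)) (hB : B = G.X 0)
    (s : G.X (n + 1) ⟶ G.X n) (hs : s ≫ G.d n = 𝟙 _) :
    PreExt.Ladder (trivPreExt n hn A B) G := by
  subst hA hB
  have h0 : (trivPreExt n hn (G.X (n + 1)) (G.X 0)).X 0 = G.X 0 := by simp [trivPreExt, trivX]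
  have h1 : (trivPreExt n hn (G.X (n + 1)) (G.X 0)).X (n + 1) = G.X (n + 1) := by
    simp only [trivPreExt, trivX]
    rw [if_neg (by omega), if_pos (by omega)]
  have i0 := triv_d_zero n hn (G.X (n + 1)) (G.X 0)
  have i1 := triv_d_last n hn (G.X (n + 1)) (G.X 0)
  have hd := triv_d_mid n hn (G.X (n + 1)) (G.X 0)
  have hz := triv_isZero n hn (G.X (n + 1)) (G.X 0)
  generalize trivPreExt n hn (G.X (n + 1)) (G.X 0) = T at *
  have key : ∀ i, ∃ φ : T.X i ⟶ G.X i, (∀ h : i = 0, φ = eqToHom (by subst h; exact h0)) ∧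
      (∀ h : i = n + 1, φ = eqToHom (by subst h; exact h1)) ∧
      (∀ h : i = 0 + 1, φ = eqToHom (by rw [h]) ≫ inv (T.d 0) ≫ eqToHom h0 ≫ G.d 0 ≫
        eqToHom (by rw [h])) ∧
      (∀ h : i = n, φ = eqToHom (by rw [h]) ≫ T.d n ≫ eqToHom h1 ≫ s ≫ eqToHom (by rw [h])) := by
    intro i
    by_cases c0 : i = 0
    · subst c0
      exact ⟨eqToHom h0, fun _ => rfl, fun _ => by omega, fun _ => by omega, fun _ => by omega⟩
    by_cases c1 : i = n + 1
    · subst c1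
      exact ⟨eqToHom h1, fun _ => by omega, fun _ => rfl, fun _ => by omega, fun _ => by omega⟩
    by_cases c2 : i = 0 + 1
    · exact ⟨eqToHom (by rw [c2]) ≫ inv (T.d 0) ≫ eqToHom h0 ≫ G.d 0 ≫ eqToHom (by rw [c2]),
        fun _ => by omega, fun _ => by omega, fun _ => rfl, fun _ => by omega⟩
    by_cases c3 : i = n
    · exact ⟨eqToHom (by rw [c3]) ≫ T.d n ≫ eqToHom h1 ≫ s ≫ eqToHom (by rw [c3]),
        fun _ => by omega, fun _ => by omega, fun _ => by omega, fun _ => rfl⟩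
    exact ⟨0, fun _ => by omega, fun _ => by omega, fun _ => by omega, fun _ => by omega⟩
  choose φ k0 k1 k2 k3 using key
  refine ⟨h0, h1, φ, k0 0 rfl, k1 (n + 1) rfl, fun i hi => ?_⟩
  by_cases c0 : i = 0
  · subst c0
    rw [k0 0 rfl, k2 (0 + 1) rfl]
    simp
  by_cases c1 : i = n
  · subst c1
    rw [k1 (i + 1) rfl, k3 i rfl]
    simp [hs]
  rw [hd i c0 c1, zero_comp]
  by_cases c2 : i = 0 + 1
  · subst c2
    rw [k2 (0 + 1) rfl]
    obtain ⟨w, -⟩ := hG.2.2 0 (by omega)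
    simp [w]
  · exact (hz i (by omega) (by omega)).eq_of_src _ _

end

lemma classZero_of_SE {n : ℕ} (hn : 2 ≤ n) {E : PreExt C n} (hE : E.IsExt) (h : SE E) :
    E.classZero n hn := by
  obtain ⟨K, hK, ⟨r⟩, G, f, s, hG, hf, hs⟩ := h
  have hGz : Tail (n + 1) G := by
    refine ⟨hG, fun i hi => ?_⟩
    have := hf.2 i (by omega)
    exact (hK.2 i hi).of_iso (asIso (f.f i)).symm
  let φ : ∀ i, E.X i ⟶ G.X i := fun i =>
    if h : i ≤ n + 1 then (r.e i h).inv ≫ f.f i else 0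
  have hφ : ∀ i (h : i ≤ n + 1), φ i = (r.e i h).inv ≫ f.f i := fun i h => dif_pos h
  have i0 : IsIso (φ 0) := by
    have := hf.1
    rw [hφ 0 (by omega)]; exact inferInstanceAs (IsIso (_ ≫ f.f 0))
  have i1 : IsIso (φ (n + 1)) := by
    have := hf.2 (n + 1) (by omega)
    rw [hφ (n + 1) le_rfl]; exact inferInstanceAs (IsIso (_ ≫ f.f (n + 1)))
  obtain ⟨H, e, hH, hd, ⟨h0, e0⟩, ⟨h1, e1⟩⟩ := fixup (k := n + 1) G hGz φ i0 i1
  have l1 : PreExt.Ladder E H := by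
    refine ⟨h0, h1, fun i => φ i ≫ (e i).inv, e0, e1, fun i hi => ?_⟩
    rw [hd]
    simp only [Category.assoc, Iso.inv_hom_id_assoc]
    rw [hφ i (by omega), hφ (i + 1) (by omega)]
    have h2 := f.comm i (i + 1)
    rw [r.hd i hi] at h2
    simp only [Category.assoc]
    rw [reassoc_of% h2]
    simp
  have l2 : PreExt.Ladder (trivPreExt n hn (E.X (n + 1)) (E.X 0)) H := by
    refine ladder_triv n hn _ _ hH h1 h0 ((e (n + 1)).hom ≫ s ≫ (e n).inv) ?_
    rw [hd]
    simp only [Category.assoc, Iso.inv_hom_id_assoc]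
    rw [reassoc_of% hs]
    simp
  exact (Relation.EqvGen.rel _ _ ⟨hE, hH, l1⟩).trans _ _ _
    ((Relation.EqvGen.rel _ _ ⟨triv_isExt n hn _ _, hH, l2⟩).symm _ _)

end YonedaAux

/-- Lemma 3.2 of the paper. Let `𝒜` be an abelian category and
`E = (0 → B → E₁ → ⋯ → Eₙ → A → 0)` an `n`-extension of `A = E.X (n+1)` by
`B = E.X 0`.  Its Yoneda class is zero in `YExtⁿ(A, B)` if and only if there is
an `(n-1)`-extension `F = (0 → B → F₁ → ⋯ → F_{n-1} → Eₙ → 0)` together with a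
morphism of complexes `φ : E → F` inducing the identity on `B` and on `Eₙ`. -/
theorem statement0 {C : Type u} [Category.{v} C] [Abelian C]
    (n : ℕ) (hn : 2 ≤ n) (E : PreExt C n) (hE : E.IsExt) :
    E.classZero n hn ↔
      ∃ F : PreExt C (n - 1), F.IsExt ∧
        ∃ (h0 : E.X 0 = F.X 0) (h1 : E.X n = F.X n)
          (φ : ∀ i, E.X i ⟶ F.X i),
          φ 0 = eqToHom h0 ∧ φ n = eqToHom h1 ∧
          ∀ i, i + 1 ≤ n → E.d i ≫ φ (i + 1) = φ i ≫ F.d i := by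
  have h1 : E.classZero n hn ↔ YonedaAux.SE E :=
    ⟨fun h => (YonedaAux.SE_iff_of_yEquiv hn h).2 (YonedaAux.SE_triv n hn _ _), YonedaAux.classZero_of_SE hn hE⟩
  rw [h1]
  obtain ⟨m, rfl⟩ : ∃ m, n = m + 1 := ⟨n - 1, by omega⟩
  constructor
  · rintro ⟨K, hK, ⟨r⟩, hS⟩
    obtain ⟨F, f, hF, if0, if1⟩ := hS.toPK hn hK
    let φ : ∀ i, E.X i ⟶ F.X i := fun i =>
      if h : i ≤ m + 1 + 1 then (r.e i h).inv ≫ f.f i else 0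
    have hφ : ∀ i (h : i ≤ m + 1 + 1), φ i = (r.e i h).inv ≫ f.f i := fun i h => dif_pos h
    have i0 : IsIso (φ 0) := by
      rw [hφ 0 (by omega)]; exact inferInstanceAs (IsIso (_ ≫ f.f 0))
    have i1 : IsIso (φ (m + 1)) := by
      rw [hφ (m + 1) (by omega)]; exact inferInstanceAs (IsIso (_ ≫ f.f (m + 1)))
    obtain ⟨H, e, hH, hd, ⟨h0, e0⟩, ⟨h1, e1⟩⟩ :=
      YonedaAux.fixup (k := m + 1) F hF φ i0 i1
    refine ⟨H, hH, h0, h1, fun i => φ i ≫ (e i).inv, e0, e1, fun i hi => ?_⟩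
    rw [hd]
    simp only [Category.assoc, Iso.inv_hom_id_assoc]
    rw [hφ i (by omega), hφ (i + 1) (by omega)]
    have h2 := f.comm i (i + 1)
    rw [r.hd i (by omega)] at h2
    simp only [Category.assoc]
    rw [reassoc_of% h2]
    simp
  · rintro ⟨F, hF, h0, h1, φ, e0, e1, hφ⟩
    change PreExt C m at F
    obtain ⟨K, hK, ⟨r⟩⟩ := YonedaAux.exists_rep E hE
    obtain ⟨L, hL, ⟨t⟩⟩ := YonedaAux.exists_rep F hF
    obtain ⟨f, hf⟩ := YonedaAux.exists_map (n' := m) (by omega) r t hL φ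
      (fun i hi => hφ i (by omega))
    refine ⟨K, hK, ⟨r⟩, YonedaAux.PK.toSK hn hK ⟨L, f, hL, ?_, ?_⟩⟩
    · rw [hf 0 (by omega), e0]; infer_instance
    · rw [hf (m + 1) le_rfl, e1]; infer_instance
end

section
/- Let A be an abelian category and let E be an n-extension 0 → B → E₁ → ... → Eₙ → A → 0 with class e. Suppose there is a morphism of complexes φ : E → G to an (n-1)-extension G = (0 → B → G₁ → ... → G_{n-1} → Eₙ → 0) inducing the identity on B and Eₙ. Fix 2 ≤ k ≤ n−1 and suppose φᵢ is injective for all i > k. Let Ē_k := E_k / Ker(φ_k) and Ē_{k-1} := G_{k-1} ×_{G_k} Ē_k (fiber product over the induced maps). Then the sequence 0 → B → G₁ → ... → G_{k-2} → Ē_{k-1} → Ē_k → E_{k+1} → ... → Eₙ → A → 0 is an n-extension representing the same Yoneda class e. -/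
open CategoryTheory Category Limits ZeroObject

universe v u

section Splice

variable {C : Type u} [Category.{v} C] [Abelian C]

lemma splice_exact_transport {X Y Z X' Y' Z' : C} (hX : X' = X) (hY : Y' = Y) (hZ : Z' = Z)
    (f : X ⟶ Y) (g : Y ⟶ Z) (f' : X' ⟶ Y') (g' : Y' ⟶ Z')
    (hf : f' = eqToHom hX ≫ f ≫ eqToHom hY.symm)
    (hg : g' = eqToHom hY ≫ g ≫ eqToHom hZ.symm)
    (H : ∃ w : f ≫ g = 0, (ShortComplex.mk f g w).Exact) :
    ∃ w : f' ≫ g' = 0, (ShortComplex.mk f' g' w).Exact := by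
  subst hX hY hZ
  simp only [eqToHom_refl, id_comp, comp_id] at hf hg
  subst hf hg
  exact H

lemma exists_splice {n n' : ℕ} (m : ℕ) (G : PreExt C n') (E : PreExt C n) (P Q : C)
    (a : G.X m ⟶ P) (b : P ⟶ Q) (c : Q ⟶ E.X (m + 3)) :
    ∃ (N : PreExt C n) (hlow : ∀ i, i ≤ m → N.X i = G.X i) (hP : N.X (m + 1) = P)
      (hQ : N.X (m + 2) = Q) (hhigh : ∀ i, m + 3 ≤ i → N.X i = E.X i),
      (∀ i (h : i + 1 ≤ m), N.d i = eqToHom (hlow i (by omega)) ≫ G.d i ≫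
        eqToHom (hlow (i + 1) h).symm) ∧
      N.d m = eqToHom (hlow m le_rfl) ≫ a ≫ eqToHom hP.symm ∧
      N.d (m + 1) = eqToHom hP ≫ b ≫ eqToHom hQ.symm ∧
      N.d (m + 2) = eqToHom hQ ≫ c ≫ eqToHom (hhigh (m + 3) le_rfl).symm ∧
      (∀ i (h : m + 3 ≤ i), N.d i = eqToHom (hhigh i h) ≫ E.d i ≫
        eqToHom (hhigh (i + 1) (by omega)).symm) := by
  let X : ℕ → C := fun i => if i ≤ m then G.X i else if i = m + 1 then P else
    if i = m + 2 then Q else E.X i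
  have hlow : ∀ i, i ≤ m → X i = G.X i := fun i h => if_pos h
  have hP : ∀ i, i = m + 1 → X i = P := fun i h => by
    simp only [X]; rw [if_neg (by omega), if_pos h]
  have hQ : ∀ i, i = m + 2 → X i = Q := fun i h => by
    simp only [X]; rw [if_neg (by omega), if_neg (by omega), if_pos h]
  have hhigh : ∀ i, m + 3 ≤ i → X i = E.X i := fun i h => by
    simp only [X]; rw [if_neg (by omega), if_neg (by omega), if_neg (by omega)]
  let d : ∀ i, X i ⟶ X (i + 1) := fun i =>
    if h : i + 1 ≤ m then
      eqToHom (hlow i (by omega)) ≫ G.d i ≫ eqToHom (hlow (i + 1) h).symm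
    else if h1 : i = m then
      eqToHom ((hlow i (by omega)).trans (congrArg G.X h1)) ≫ a ≫
        eqToHom (hP (i + 1) (by omega)).symm
    else if h2 : i = m + 1 then
      eqToHom (hP i h2) ≫ b ≫ eqToHom (hQ (i + 1) (by omega)).symm
    else if h3 : i = m + 2 then
      eqToHom (hQ i h3) ≫ c ≫ eqToHom ((hhigh (i + 1) (by omega)).trans
        (congrArg E.X (by omega))).symm
    else eqToHom (hhigh i (by omega)) ≫ E.d i ≫ eqToHom (hhigh (i + 1) (by omega)).symm
  refine ⟨⟨X, d⟩, hlow, hP _ rfl, hQ _ rfl, hhigh, ?_, ?_, ?_, ?_, ?_⟩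
  · intro i h
    simp only [d]; rw [dif_pos h]
  · simp only [d]; rw [dif_neg (by omega), dif_pos trivial]
  · simp only [d]; rw [dif_neg (by omega), dif_neg (by omega), dif_pos trivial]
  · simp only [d]; rw [dif_neg (by omega), dif_neg (by omega), dif_neg (by omega), dif_pos trivial]
  · intro i h
    simp only [d]
    rw [dif_neg (by omega), dif_neg (by omega), dif_neg (by omega), dif_neg (by omega)]

lemma exists_splice_map (m : ℕ) (F G E N : ℕ → C) (P Q : C)
    (hlow : ∀ i, i ≤ m → N i = G i) (hP : N (m + 1) = P)
    (hQ : N (m + 2) = Q) (hhigh : ∀ i, m + 3 ≤ i → N i = E i)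
    (φ : ∀ i, F i ⟶ G i) (p : F (m + 1) ⟶ P) (q : F (m + 2) ⟶ Q) (θ : ∀ i, F i ⟶ E i) :
    ∃ ψ : ∀ i, F i ⟶ N i,
      (∀ i (h : i ≤ m), ψ i = φ i ≫ eqToHom (hlow i h).symm) ∧
      ψ (m + 1) = p ≫ eqToHom hP.symm ∧ ψ (m + 2) = q ≫ eqToHom hQ.symm ∧
      (∀ i (h : m + 3 ≤ i), ψ i = θ i ≫ eqToHom (hhigh i h).symm) := by
  let ψ : ∀ i, F i ⟶ N i := fun i =>
    if h : i ≤ m then φ i ≫ eqToHom (hlow i h).symm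
    else if h1 : i = m + 1 then
      eqToHom (congrArg F h1) ≫ p ≫ eqToHom (by rw [h1, hP])
    else if h2 : i = m + 2 then
      eqToHom (congrArg F h2) ≫ q ≫ eqToHom (by rw [h2, hQ])
    else θ i ≫ eqToHom (hhigh i (by omega)).symm
  refine ⟨ψ, ?_, ?_, ?_, ?_⟩
  · intro i h
    simp only [ψ]; rw [dif_pos h]
  · simp only [ψ]; rw [dif_neg (by omega), dif_pos trivial]; simp
  · simp only [ψ]; rw [dif_neg (by omega), dif_neg (by omega), dif_pos trivial]; simp
  · intro i h
    simp only [ψ]; rw [dif_neg (by omega), dif_neg (by omega), dif_neg (by omega)]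

theorem splice_core
    (n : ℕ) (E : PreExt C n) (hE : E.IsExt)
    (G : PreExt C (n - 1)) (hG : G.IsExt)
    (h0 : E.X 0 = G.X 0)
    (φ : ∀ i, E.X i ⟶ G.X i)
    (hφ0 : φ 0 = eqToHom h0)
    (hsq : ∀ i, i + 1 ≤ n → E.d i ≫ φ (i + 1) = φ i ≫ G.d i)
    (m : ℕ) (hkn : m + 2 ≤ n - 1)
    (hmono : ∀ i, m + 2 < i → i ≤ n → Mono (φ i))
    (δ : G.X (m + 1) ⟶ G.X (m + 2)) (hδ : δ = G.d (m + 1)) :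
    ∃ N : PreExt C n, N.IsExt ∧ PreExt.YEquiv N E ∧
      ∃ (hlow : ∀ i, i ≤ m → N.X i = G.X i)
        (hbar1 : N.X (m + 1) = pullback δ (Abelian.factorThruCoimage (φ (m + 2))))
        (hbar : N.X (m + 2) = Abelian.coimage (φ (m + 2)))
        (hhigh : ∀ i, m + 3 ≤ i → N.X i = E.X i),
        (∀ i (h : i + 1 ≤ m),
          N.d i = eqToHom (hlow i (by omega)) ≫ G.d i ≫
            eqToHom (hlow (i + 1) h).symm) ∧
        (N.d m ≫ eqToHom hbar1 ≫
            pullback.fst δ (Abelian.factorThruCoimage (φ (m + 2))) =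
          eqToHom (hlow m le_rfl) ≫ G.d m) ∧
        (N.d m ≫ eqToHom hbar1 ≫
            pullback.snd δ (Abelian.factorThruCoimage (φ (m + 2))) = 0) ∧
        (N.d (m + 1) = eqToHom hbar1 ≫
            pullback.snd δ (Abelian.factorThruCoimage (φ (m + 2))) ≫ eqToHom hbar.symm) ∧
        (Abelian.coimage.π (φ (m + 2)) ≫ eqToHom hbar.symm ≫ N.d (m + 2) =
          E.d (m + 2) ≫ eqToHom (hhigh (m + 3) le_rfl).symm) ∧
        (∀ i (hi : m + 3 ≤ i),
          N.d i = eqToHom (hhigh i (by omega)) ≫ E.d i ≫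
            eqToHom (hhigh (i + 1) (by omega)).symm) := by
  obtain ⟨hE0, hEn, hEx⟩ := hE
  obtain ⟨hG0, hGn, hGx⟩ := hG
  have hm3 : Mono (φ (m + 3)) := hmono _ (by omega) (by omega)
  obtain ⟨wG, xG⟩ := hGx m (by omega)
  obtain ⟨wG1, xG1⟩ := hGx (m + 1) (by omega)
  obtain ⟨wE1, xE1⟩ := hEx (m + 1) (by omega)
  obtain ⟨wE2, xE2⟩ := hEx (m + 2) (by omega)
  subst hδ
  set ι := Abelian.factorThruCoimage (φ (m + 2)) with hι
  set π := Abelian.coimage.π (φ (m + 2)) with hπ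
  have hπι : π ≫ ι = φ (m + 2) := Abelian.coimage.fac _
  let a : G.X m ⟶ pullback (G.d (m + 1)) ι := pullback.lift (G.d m) 0 (by rw [wG, zero_comp])
  have ha1 : a ≫ pullback.fst _ _ = G.d m := pullback.lift_fst _ _ _
  have ha2 : a ≫ pullback.snd _ _ = 0 := pullback.lift_snd _ _ _
  let b : pullback (G.d (m + 1)) ι ⟶ Abelian.coimage (φ (m + 2)) := pullback.snd _ _
  let c : Abelian.coimage (φ (m + 2)) ⟶ E.X (m + 3) :=
    cokernel.desc _ (E.d (m + 2)) (by
      rw [← cancel_mono (φ (m + 3)), assoc, hsq (m + 2) (by omega), kernel.condition_assoc,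
        zero_comp, zero_comp])
  have hc : π ≫ c = E.d (m + 2) := cokernel.π_desc _ _ _
  have hπe : Epi π := by rw [hπ]; infer_instance
  have hcφ : c ≫ φ (m + 3) = ι ≫ G.d (m + 2) := by
    rw [← cancel_epi π, ← assoc, hc, hsq (m + 2) (by omega), ← assoc, hπι]
  have hbc : b ≫ c = 0 := by
    rw [← cancel_mono (φ (m + 3)), assoc, hcφ, zero_comp, ← assoc]
    rw [show b ≫ ι = _ from pullback.condition.symm, assoc, wG1, comp_zero]
  -- exactness of the new pieces
  have xa : (ShortComplex.mk a b ha2).Exact := by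
    rw [ShortComplex.exact_iff_exact_up_to_refinements] at xG ⊢
    intro A x hx
    dsimp at x hx
    obtain ⟨A', p, hp, y, hy⟩ := xG (x ≫ pullback.fst _ _) (by
      dsimp
      rw [assoc, pullback.condition, ← assoc, show x ≫ pullback.snd _ _ = 0 from hx, zero_comp])
    refine ⟨A', p, hp, y, ?_⟩
    dsimp at y hy ⊢
    apply pullback.hom_ext
    · rw [assoc, hy, assoc, ha1]
    · rw [assoc, show x ≫ pullback.snd _ _ = 0 from hx, assoc, ha2, comp_zero, comp_zero]
  have xb : (ShortComplex.mk b c hbc).Exact := by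
    rw [ShortComplex.exact_iff_exact_up_to_refinements] at xG1 ⊢
    intro A x hx
    dsimp at x hx
    obtain ⟨A', p, hp, y, hy⟩ := xG1 (x ≫ ι) (by
      dsimp
      rw [assoc, ← hcφ, ← assoc, hx, zero_comp])
    dsimp at y hy
    refine ⟨A', p, hp, pullback.lift y (p ≫ x) (by rw [← hy, assoc]), ?_⟩
    exact (pullback.lift_snd _ _ _).symm
  have hcd : c ≫ E.d (m + 3) = 0 := by
    rw [← cancel_epi π, ← assoc, hc, comp_zero]; exact wE2
  have xc : (ShortComplex.mk c (E.d (m + 3)) hcd).Exact := by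
    rw [ShortComplex.exact_iff_exact_up_to_refinements] at xE2 ⊢
    intro A x hx
    obtain ⟨A', p, hp, y, hy⟩ := xE2 x hx
    dsimp at y hy
    refine ⟨A', p, hp, y ≫ π, ?_⟩
    dsimp
    rw [assoc, hc]; exact hy
  obtain ⟨N, hlow, hP, hQ, hhigh, d1, d2, d3, d4, d5⟩ := exists_splice m G E _ _ a b c
  have hN : N.IsExt := by
    refine ⟨?_, ?_, ?_⟩
    · rcases Nat.eq_zero_or_pos m with hm | hm
      · subst hm
        have : Mono (a ≫ pullback.fst _ _) := by rw [ha1]; exact hG0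
        have : Mono a := mono_of_mono a (pullback.fst _ _)
        rw [d2]; infer_instance
      · rw [d1 0 (by omega)]; infer_instance
    · rw [d5 n (by omega)]; infer_instance
    · intro i hi
      rcases Nat.lt_or_ge (i + 1) m with h | h
      · exact splice_exact_transport (hlow i (by omega)) (hlow (i + 1) (by omega))
          (hlow (i + 2) (by omega)) _ _ _ _ (d1 i (by omega)) (d1 (i + 1) (by omega))
          (hGx i (by omega))
      rcases Nat.eq_or_lt_of_le h with h | h
      · subst h
        refine splice_exact_transport (hlow i (by omega)) (hlow (i + 1) le_rfl) hP
          _ _ _ _ (d1 i (by omega)) d2 ?_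
        obtain ⟨w, x⟩ := hGx i (by omega)
        have w' : G.d i ≫ a = 0 := by
          apply pullback.hom_ext
          · rw [assoc, ha1, w, zero_comp]
          · rw [assoc, ha2, comp_zero, zero_comp]
        refine ⟨w', ?_⟩
        rw [ShortComplex.exact_iff_exact_up_to_refinements] at x ⊢
        intro A y hy
        dsimp at y hy
        have hy' : y ≫ G.d (i + 1) = 0 := by rw [← ha1, ← assoc, hy, zero_comp]
        exact x y hy'
      rcases Nat.lt_or_ge m i with h' | h'
      swap
      · obtain rfl : i = m := by omega
        exact splice_exact_transport (hlow _ le_rfl) hP hQ _ _ _ _ d2 d3 ⟨_, xa⟩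
      rcases Nat.lt_or_ge (m + 1) i with h' | h'
      swap
      · obtain rfl : i = m + 1 := by omega
        exact splice_exact_transport hP hQ (hhigh _ le_rfl) _ _ _ _ d3 d4 ⟨_, xb⟩
      rcases Nat.lt_or_ge (m + 2) i with h' | h'
      swap
      · obtain rfl : i = m + 2 := by omega
        exact splice_exact_transport hQ (hhigh _ le_rfl) (hhigh (m + 4) (by omega))
          _ _ _ _ d4 (d5 (m + 3) le_rfl) ⟨_, xc⟩
      exact splice_exact_transport (hhigh i (by omega)) (hhigh (i + 1) (by omega))
        (hhigh (i + 2) (by omega)) _ _ _ _ (d5 i (by omega)) (d5 (i + 1) (by omega))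
        (hEx i (by omega))
  refine ⟨N, hN, ?_, hlow, hP, hQ, hhigh, d1, ?_, ?_, d3, ?_, d5⟩
  · apply Relation.EqvGen.symm
    apply Relation.EqvGen.rel
    refine ⟨⟨hE0, hEn, hEx⟩, hN, ?_⟩
    let q : E.X (m + 1) ⟶ pullback (G.d (m + 1)) ι :=
      pullback.lift (φ (m + 1)) (E.d (m + 1) ≫ π) (by
        rw [assoc, hπι, hsq (m + 1) (by omega)])
    have hq1 : q ≫ pullback.fst _ _ = φ (m + 1) := pullback.lift_fst _ _ _
    have hq2 : q ≫ b = E.d (m + 1) ≫ π := pullback.lift_snd _ _ _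
    obtain ⟨ψ, p1, p2, p3, p4⟩ := exists_splice_map m E.X G.X E.X N.X _ _ hlow hP hQ hhigh
      φ q π (fun i => 𝟙 _)
    refine ⟨h0.trans (hlow 0 (by omega)).symm, (hhigh (n + 1) (by omega)).symm, ψ, ?_, ?_, ?_⟩
    · rw [p1 0 (by omega), hφ0, eqToHom_trans]
    · rw [p4 (n + 1) (by omega), id_comp]
    · intro i hi
      rcases Nat.lt_or_ge i m with h | h
      · rw [p1 i (by omega), p1 (i + 1) (by omega), d1 i (by omega), ← assoc,
          hsq i (by omega)]
        simp
      rcases Nat.eq_or_lt_of_le h with h | h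
      · subst h
        rw [p1 m (by omega), p2, d2]
        have : E.d m ≫ q = φ m ≫ a := by
          apply pullback.hom_ext
          · rw [assoc, hq1, assoc, ha1, hsq m (by omega)]
          · obtain ⟨w, -⟩ := hEx m (by omega)
            rw [assoc, assoc, ha2, comp_zero]
            erw [hq2]
            rw [← assoc, w, zero_comp]
        rw [← assoc, this]
        simp
      rcases Nat.eq_or_lt_of_le (show m + 1 ≤ i from h) with h | h
      · subst h
        rw [p2, p3, d3, ← assoc, ← hq2]
        simp
      rcases Nat.eq_or_lt_of_le (show m + 2 ≤ i from h) with h | h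
      · subst h
        rw [p3, p4 (m + 2 + 1) (by omega), d4, ← hc]
        simp
      · rw [p4 i (by omega), p4 (i + 1) (by omega), d5 i (by omega)]
        simp
  · rw [d2, ← ha1]; simp
  · rw [d2]
    simp only [assoc, eqToHom_trans_assoc, eqToHom_refl, id_comp, ha2, comp_zero]
  · rw [d4, ← hc]; simp

end Splice

set_option maxHeartbeats 1000000

/-- Let `E` be an `n`-extension `0 → B → E₁ → ⋯ → Eₙ → A → 0` and
`φ : E → G` a morphism of complexes to an `(n-1)`-extension
`G = (0 → B → G₁ → ⋯ → G_{n-1} → Eₙ → 0)` inducing the identity on `B` and `Eₙ`.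
Fix `2 ≤ k ≤ n-1` and assume `φᵢ` is a monomorphism for `i > k`.  With
`Ē_k := E_k / Ker(φ_k)` (the coimage of `φ_k`) and
`Ē_{k-1} := G_{k-1} ×_{G_k} Ē_k`, the sequence
`0 → B → G₁ → ⋯ → G_{k-2} → Ē_{k-1} → Ē_k → E_{k+1} → ⋯ → Eₙ → A → 0`
(with the evident induced maps) is an `n`-extension representing the same Yoneda
class as `E`. -/
theorem statement15 {C : Type u} [Category.{v} C] [Abelian C]
    (n : ℕ) (hn : 3 ≤ n) (E : PreExt C n) (hE : E.IsExt)
    (G : PreExt C (n - 1)) (hG : G.IsExt)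
    (h0 : E.X 0 = G.X 0) (h1 : E.X n = G.X n)
    (φ : ∀ i, E.X i ⟶ G.X i)
    (hφ0 : φ 0 = eqToHom h0) (hφn : φ n = eqToHom h1)
    (hsq : ∀ i, i + 1 ≤ n → E.d i ≫ φ (i + 1) = φ i ≫ G.d i)
    (k : ℕ) (hk2 : 2 ≤ k) (hkn : k ≤ n - 1)
    (hmono : ∀ i, k < i → i ≤ n → Mono (φ i)) :
    ∃ N : PreExt C n, N.IsExt ∧ PreExt.YEquiv N E ∧
      ∃ (hlow : ∀ i, i ≤ k - 2 → N.X i = G.X i)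
        (hbar1 : N.X (k - 1) =
          pullback (G.d (k - 1) ≫ eqToHom (congrArg G.X (by omega : k - 1 + 1 = k))) (Abelian.factorThruCoimage (φ k)))
        (hbar : N.X k = Abelian.coimage (φ k))
        (hhigh : ∀ i, k + 1 ≤ i → N.X i = E.X i),
        -- in degrees `≤ k-3` the differentials are those of `G`
        (∀ i (h : i + 1 ≤ k - 2),
          N.d i = eqToHom (hlow i (by omega)) ≫ G.d i ≫
            eqToHom (hlow (i + 1) h).symm) ∧
        -- the map `G_{k-2} → Ē_{k-1}` has components `G.d (k-2)` and `0`
        (N.d (k - 2) ≫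
            eqToHom (show N.X (k - 2 + 1) =
              pullback (G.d (k - 1) ≫ eqToHom (congrArg G.X (by omega : k - 1 + 1 = k))) (Abelian.factorThruCoimage (φ k)) by
                rw [show k - 2 + 1 = k - 1 by omega]; exact hbar1) ≫
            pullback.fst (G.d (k - 1) ≫ eqToHom (congrArg G.X (by omega : k - 1 + 1 = k))) (Abelian.factorThruCoimage (φ k)) =
          eqToHom (hlow (k - 2) le_rfl) ≫ G.d (k - 2) ≫
            eqToHom (congrArg G.X (by omega : k - 2 + 1 = k - 1))) ∧
        (N.d (k - 2) ≫
            eqToHom (show N.X (k - 2 + 1) =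
              pullback (G.d (k - 1) ≫ eqToHom (congrArg G.X (by omega : k - 1 + 1 = k))) (Abelian.factorThruCoimage (φ k)) by
                rw [show k - 2 + 1 = k - 1 by omega]; exact hbar1) ≫
            pullback.snd (G.d (k - 1) ≫ eqToHom (congrArg G.X (by omega : k - 1 + 1 = k))) (Abelian.factorThruCoimage (φ k)) = 0) ∧
        -- the map `Ē_{k-1} → Ē_k` is the second projection
        (N.d (k - 1) = eqToHom hbar1 ≫
            pullback.snd (G.d (k - 1) ≫ eqToHom (congrArg G.X (by omega : k - 1 + 1 = k))) (Abelian.factorThruCoimage (φ k)) ≫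
            eqToHom (show Abelian.coimage (φ k) = N.X (k - 1 + 1) by
              rw [show k - 1 + 1 = k by omega]; exact hbar.symm)) ∧
        -- the map `Ē_k → E_{k+1}` is induced by `E.d k`
        (Abelian.coimage.π (φ k) ≫ eqToHom hbar.symm ≫ N.d k =
          E.d k ≫ eqToHom (hhigh (k + 1) le_rfl).symm) ∧
        -- in degrees `≥ k+1` the differentials are those of `E`
        (∀ i (hi : k + 1 ≤ i) (hi' : i ≤ n),
          N.d i = eqToHom (hhigh i (by omega)) ≫ E.d i ≫
            eqToHom (hhigh (i + 1) (by omega)).symm) := by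
  obtain ⟨m, rfl⟩ : ∃ m, k = m + 2 := ⟨k - 2, by omega⟩
  obtain ⟨N, hN, hY, hlow, hP, hQ, hhigh, d1, d2, d3, d4, d5, d6⟩ :=
    splice_core n E hE G hG h0 φ hφ0 hsq m hkn hmono
      (G.d (m + 1) ≫ eqToHom rfl) (by rw [eqToHom_refl, comp_id])
  refine ⟨N, hN, hY, hlow, hP, hQ, hhigh, d1, ?_, d3, d4, d5, fun i hi _ => d6 i hi⟩
  refine d2.trans ?_
  change _ = eqToHom _ ≫ G.d m ≫ 𝟙 _
  rw [comp_id]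
end
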